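/- arXiv:2008.10097 — 2 statements merged into one kernel-verified Lean document; each statement's English description precedes it below -/
import Mathlib

section
/- There exists a universal constant c > 0 such that the following holds for every n ≥ 1 and every ρ ∈ [0,1]. Let (X_i, Y_i), 1 ≤ i ≤ n, be i.i.d. pairs of jointly Gaussian random variables with E[X_i] = E[Y_i] = 0, Var(X_i) = Var(Y_i) = 1, and correlation E[X_i Y_i] = ρ (equivalently, X_i = W_i and Y_i = ρ·W_i + √(1−ρ²)·Z_i for independent standard Gaussians W_i, Z_i). Then for every deterministic real n×n matrix M and every δ ∈ (0,1), with probability at least 1 − 2δ, |∑_{i,j} M_{ij}·X_i·Y_j − ρ·tr(M)| ≤ c·(‖M‖_F·√(log(1/δ)) + ‖M‖·log(1/δ)), where ‖M‖_F is the Frobenius norm and ‖M‖ the operator (spectral) norm of M. -/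
/-!
The bilinear form `wᵀ M (ρ w + s z)`, `s = √(1 - ρ²)`, is the quadratic form `gᵀ A g` of the
standard Gaussian vector `g = (w, z)` for the symmetric block matrix

  `A = [[ρ (M + Mᵀ) / 2, s M / 2], [s Mᵀ / 2, 0]]`  (`blockMat`).

It satisfies `tr A = ρ tr M`, `‖A‖_F ≤ ‖M‖_F` (`blockMat_frob`) and `|gᵀ A g| ≤ 2 ‖M‖ ‖g‖²`.

By rotation invariance of the Gaussian measure, `gᵀ A g - tr A` has the law of
`∑ aᵢ (yᵢ² - 1)` with `aᵢ` the eigenvalues of `A` and `y` standard Gaussian (`quad_tail`). Each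
summand satisfies `E exp (t (y² - 1)) = e^{-t} (1 - 2 t)^{-1/2} ≤ exp (4 t²)` for `|t| ≤ 1/4`
(`gaussian_sq_mgf_le`), so Chernoff's bound (`diag_tail`) gives the upper tail
`exp (-l t + 4 l² ‖M‖_F²)` whenever `0 ≤ l ≤ 1 / (8 ‖M‖)` (`bilin_tail`). Choosing
`l = min (√L / ‖M‖_F) (1 / (8 ‖M‖))` with `L = log (1/δ)` makes it at most `δ` at the
threshold `t = 40 (‖M‖_F √L + ‖M‖ L)` (`exists_chernoff_param`). The lower tail is the upper tail
for `-M`.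
-/

open MeasureTheory ProbabilityTheory

noncomputable section

/-- The Frobenius norm of a real matrix. -/
def frobNorm {n : ℕ} (M : Matrix (Fin n) (Fin n) ℝ) : ℝ :=
  Real.sqrt (∑ i, ∑ j, (M i j) ^ 2)

/-- The operator (spectral) norm of a real matrix, i.e. the norm of the induced continuous linear
map on Euclidean space. -/
def opNorm {n : ℕ} (M : Matrix (Fin n) (Fin n) ℝ) : ℝ :=
  ‖LinearMap.toContinuousLinearMap (Matrix.toEuclideanLin M)‖

/-! ### Moment generating function of a centred squared Gaussian -/

lemma gaussian_sq_exp_integrable {t : ℝ} (ht : |t| ≤ 1 / 4) :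
    Integrable (fun y : ℝ => Real.exp (t * (y ^ 2 - 1))) (gaussianReal 0 1) := by
  have h2 := (abs_le.mp ht).2
  rw [gaussianReal_of_var_ne_zero _ one_ne_zero,
    integrable_withDensity_iff_integrable_smul' (measurable_gaussianPDF 0 1)
      (ae_of_all _ fun _ => gaussianPDF_lt_top)]
  have := ((integrable_exp_neg_mul_sq (b := 1 / 2 - t) (by linarith)).const_mul
    ((√(2 * Real.pi))⁻¹ * Real.exp (-t)))
  refine this.congr (ae_of_all _ fun y => ?_)
  simp only [toReal_gaussianPDF, gaussianPDFReal, smul_eq_mul, NNReal.coe_one, mul_one, sub_zero]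
  rw [mul_assoc, mul_assoc, ← Real.exp_add, ← Real.exp_add]
  congr 2
  ring

/-- The moment generating function of a centred `χ²` variable is sub-Gaussian near `0`. -/
lemma gaussian_sq_mgf_le {t : ℝ} (ht : |t| ≤ 1 / 4) :
    ∫ y, Real.exp (t * (y ^ 2 - 1)) ∂(gaussianReal 0 1) ≤ Real.exp (4 * t ^ 2) := by
  have h1 := (abs_le.mp ht).1
  have h2 := (abs_le.mp ht).2
  have hval : ∫ y, Real.exp (t * (y ^ 2 - 1)) ∂(gaussianReal 0 1)
      = Real.exp (-t) * (√(1 - 2 * t))⁻¹ := by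
    rw [integral_gaussianReal_eq_integral_smul one_ne_zero]
    have : ∀ y : ℝ, gaussianPDFReal 0 1 y • Real.exp (t * (y ^ 2 - 1))
        = ((√(2 * Real.pi))⁻¹ * Real.exp (-t)) * Real.exp (-(1 / 2 - t) * y ^ 2) := by
      intro y
      simp only [gaussianPDFReal, smul_eq_mul, NNReal.coe_one, mul_one, sub_zero]
      rw [mul_assoc, mul_assoc, ← Real.exp_add, ← Real.exp_add]
      congr 2
      ring
    simp_rw [this]
    rw [integral_const_mul, integral_gaussian]
    have : Real.pi / (1 / 2 - t) = (2 * Real.pi) * (1 - 2 * t)⁻¹ := by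
      have : 1 / 2 - t ≠ 0 := by linarith
      have : 1 - 2 * t ≠ 0 := by linarith
      field_simp
    rw [this, Real.sqrt_mul (by positivity : 0 ≤ 2 * Real.pi), Real.sqrt_inv]
    have : √(2 * Real.pi) ≠ 0 := by positivity
    field_simp
  rw [hval]
  have hpos : 0 < 1 - 2 * t := by linarith
  have hs : (√(1 - 2 * t))⁻¹ = Real.exp (-(Real.log (1 - 2 * t) / 2)) := by
    rw [Real.exp_neg, ← Real.log_sqrt hpos.le, Real.exp_log (Real.sqrt_pos.mpr hpos)]
  rw [hs, ← Real.exp_add, Real.exp_le_exp]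
  have habs : |2 * t| ≤ 1 / 2 := by rw [abs_mul, abs_two]; linarith
  have hl := Real.abs_log_sub_add_sum_range_le (x := 2 * t) (by linarith) 1
  simp only [Finset.range_one, Finset.sum_singleton, zero_add, pow_one, Nat.cast_zero,
    div_one] at hl
  have hl2 : |2 * t| ^ (1 + 1) / (1 - |2 * t|) ≤ 8 * t ^ 2 := by
    rw [div_le_iff₀ (by linarith), one_add_one_eq_two, sq_abs]
    nlinarith [sq_nonneg t]
  have := (abs_le.mp (hl.trans hl2)).1
  linarith

/-- Chernoff bound for a centred diagonal quadratic form in independent standard Gaussians. -/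
lemma diag_tail {ι : Type*} [Fintype ι] (a : ι → ℝ) {l : ℝ} (hl : 0 ≤ l)
    (ha : ∀ i, |l * a i| ≤ 1 / 4) (t : ℝ) :
    (Measure.pi fun _ : ι => gaussianReal 0 1).real {y | t ≤ ∑ i, a i * (y i ^ 2 - 1)}
      ≤ Real.exp (-l * t + 4 * l ^ 2 * ∑ i, a i ^ 2) := by
  have hexp : ∀ y : ι → ℝ, Real.exp (l * ∑ i, a i * (y i ^ 2 - 1))
      = ∏ i, Real.exp (l * a i * (y i ^ 2 - 1)) := by
    intro y
    rw [← Real.exp_sum, Finset.mul_sum]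
    simp_rw [mul_assoc]
  have hint : Integrable (fun y : ι → ℝ => Real.exp (l * ∑ i, a i * (y i ^ 2 - 1)))
      (Measure.pi fun _ : ι => gaussianReal 0 1) := by
    simp_rw [hexp]
    exact Integrable.fintype_prod (f := fun i (x : ℝ) => Real.exp (l * a i * (x ^ 2 - 1)))
      fun i => gaussian_sq_exp_integrable (ha i)
  refine (measure_ge_le_exp_mul_mgf t hl hint).trans ?_
  rw [Real.exp_add]
  refine mul_le_mul_of_nonneg_left ?_ (Real.exp_nonneg _)
  rw [mgf]
  simp_rw [hexp]
  rw [integral_fintype_prod_eq_prod (f := fun i (x : ℝ) => Real.exp (l * a i * (x ^ 2 - 1))),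
    Finset.mul_sum, Real.exp_sum]
  refine Finset.prod_le_prod (fun i _ => integral_nonneg fun _ => Real.exp_nonneg _)
    fun i _ => (gaussian_sq_mgf_le (ha i)).trans (le_of_eq ?_)
  congr 1
  ring

/-! ### Quadratic forms of a standard Gaussian vector -/

open Matrix in
/-- A quadratic form in the coordinates of an orthonormal eigenbasis. -/
lemma quad_eigen {ι : Type*} [Fintype ι] [DecidableEq ι] {A : Matrix ι ι ℝ}
    (hA : A.IsHermitian) (y : ι → ℝ) :
    (∑ i, y i • hA.eigenvectorBasis i).ofLp ⬝ᵥ A *ᵥ (∑ i, y i • hA.eigenvectorBasis i).ofLp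
      = ∑ i, hA.eigenvalues i * y i ^ 2 := by
  have h1 : A *ᵥ (∑ i, y i • hA.eigenvectorBasis i).ofLp
      = (∑ i, (hA.eigenvalues i * y i) • hA.eigenvectorBasis i).ofLp := by
    simp only [WithLp.ofLp_sum, WithLp.ofLp_smul, Matrix.mulVec_sum, Matrix.mulVec_smul,
      hA.mulVec_eigenvectorBasis]
    refine Finset.sum_congr rfl fun i _ => ?_
    rw [smul_smul, mul_comm]
  rw [h1]
  have h2 := hA.eigenvectorBasis.orthonormal.inner_sum y
    (fun i => hA.eigenvalues i * y i) Finset.univ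
  rw [dotProduct_comm]
  simp only [EuclideanSpace.inner_eq_star_dotProduct, star_trivial] at h2
  rw [h2]
  refine Finset.sum_congr rfl fun i _ => ?_
  simp
  ring

open Matrix in
lemma sum_sq_eigenvalues {ι : Type*} [Fintype ι] [DecidableEq ι] {A : Matrix ι ι ℝ}
    (hA : A.IsHermitian) : ∑ i, hA.eigenvalues i ^ 2 = ∑ i, ∑ j, A i j ^ 2 := by
  have h : (A * A).trace = ∑ i, hA.eigenvalues i ^ 2 := by
    conv_lhs => rw [hA.spectral_theorem, ← map_mul, Unitary.conjStarAlgAut_apply,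
      Matrix.trace_mul_cycle]
    simp [Matrix.trace, sq]
  rw [← h, Matrix.trace]
  refine Finset.sum_congr rfl fun i _ => ?_
  rw [Matrix.diag_apply, Matrix.mul_apply]
  refine Finset.sum_congr rfl fun j _ => ?_
  rw [sq]
  congr 1
  simpa using (hA.apply i j)

open Matrix in
/-- Chernoff bound for a centred quadratic form `gᵀAg - tr A`, obtained by rotating the standard
Gaussian vector into an eigenbasis of `A`. -/
lemma quad_tail {ι : Type*} [Fintype ι] [DecidableEq ι] {A : Matrix ι ι ℝ}
    (hA : A.IsHermitian) {K l : ℝ} (hK : ∀ v : ι → ℝ, |v ⬝ᵥ A *ᵥ v| ≤ K * (v ⬝ᵥ v))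
    (hl : 0 ≤ l) (hlK : l * K ≤ 1 / 4) (t : ℝ) :
    (Measure.pi fun _ : ι => gaussianReal 0 1).real {g | t ≤ g ⬝ᵥ A *ᵥ g - A.trace}
      ≤ Real.exp (-l * t + 4 * l ^ 2 * ∑ i, ∑ j, A i j ^ 2) := by
  have hmap : (Measure.pi fun _ : ι => gaussianReal 0 1).map (WithLp.toLp 2)
      = (Measure.pi fun _ : ι => gaussianReal 0 1).map
        (fun y => ∑ i, y i • hA.eigenvectorBasis i) := by
    rw [map_pi_eq_stdGaussian, stdGaussian_eq_map_pi_orthonormalBasis hA.eigenvectorBasis]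
  have hS : MeasurableSet {x : EuclideanSpace ℝ ι | t ≤ x.ofLp ⬝ᵥ A *ᵥ x.ofLp - A.trace} := by
    refine measurableSet_le measurable_const ?_
    simp only [dotProduct, mulVec]
    fun_prop
  have hrot : (Measure.pi fun _ : ι => gaussianReal 0 1).real {g | t ≤ g ⬝ᵥ A *ᵥ g - A.trace}
      = (Measure.pi fun _ : ι => gaussianReal 0 1).real
        {y | t ≤ ∑ i, hA.eigenvalues i * (y i ^ 2 - 1)} := by
    have := congrArg (fun m => m {x : EuclideanSpace ℝ ι |
      t ≤ x.ofLp ⬝ᵥ A *ᵥ x.ofLp - A.trace}) hmap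
    simp only at this
    rw [Measure.map_apply (by fun_prop) hS, Measure.map_apply (by fun_prop) hS] at this
    simp only [Measure.real]
    congr 1
    refine this.trans (congrArg _ ?_)
    ext y
    simp only [Set.mem_ofPred_eq, Set.mem_preimage]
    rw [quad_eigen, hA.trace_eq_sum_eigenvalues, ← Finset.sum_sub_distrib]
    simp [mul_sub]
  rw [hrot, ← sum_sq_eigenvalues hA]
  refine diag_tail _ hl (fun i => ?_) t
  -- `|aᵢ| ≤ K`, since `aᵢ` is the value of the form at the unit eigenvector `bᵢ`.
  have h1 := quad_eigen hA (Pi.single i 1)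
  have h2 := hK (hA.eigenvectorBasis i).ofLp
  have h3 : (hA.eigenvectorBasis i).ofLp ⬝ᵥ (hA.eigenvectorBasis i).ofLp = 1 := by
    have := real_inner_self_eq_norm_sq (hA.eigenvectorBasis i)
    rwa [hA.eigenvectorBasis.orthonormal.1 i, one_pow,
      EuclideanSpace.inner_eq_star_dotProduct, star_trivial] at this
  have h4 : (∑ j, (Pi.single i 1 : ι → ℝ) j • hA.eigenvectorBasis j)
      = hA.eigenvectorBasis i := by
    simp [Pi.single_apply]
  have h5 : ∑ j, hA.eigenvalues j * (Pi.single i 1 : ι → ℝ) j ^ 2 = hA.eigenvalues i := by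
    simp [Pi.single_apply]
  rw [h4, h5] at h1
  rw [h1, h3, mul_one] at h2
  rw [abs_mul, abs_of_nonneg hl]
  exact (mul_le_mul_of_nonneg_left h2 hl).trans hlK

/-! ### The correlated bilinear form as a quadratic form -/

open Matrix in
/-- Operator norm bound for the bilinear form, followed by `‖x‖ ‖z‖ ≤ (‖x‖² + ‖z‖²) / 2`. -/
lemma bilin_le {n : ℕ} (M : Matrix (Fin n) (Fin n) ℝ) (x z : Fin n → ℝ) :
    |x ⬝ᵥ M *ᵥ z| ≤ opNorm M * ((x ⬝ᵥ x + z ⬝ᵥ z) / 2) := by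
  have hsq : ∀ v : Fin n → ℝ, v ⬝ᵥ v = ‖WithLp.toLp 2 v‖ ^ 2 := fun v => by
    rw [← real_inner_self_eq_norm_sq, EuclideanSpace.inner_eq_star_dotProduct, star_trivial]
  have h1 : x ⬝ᵥ M *ᵥ z = inner ℝ (WithLp.toLp 2 x)
      (LinearMap.toContinuousLinearMap (Matrix.toEuclideanLin M) (WithLp.toLp 2 z)) := by
    rw [EuclideanSpace.inner_eq_star_dotProduct, star_trivial, dotProduct_comm]
    rfl
  have h2 := (LinearMap.toContinuousLinearMap (Matrix.toEuclideanLin M)).le_opNorm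
    (WithLp.toLp 2 z)
  have h0 : 0 ≤ opNorm M := norm_nonneg _
  rw [h1, hsq, hsq]
  refine (abs_real_inner_le_norm _ _).trans ((mul_le_mul_of_nonneg_left h2 (norm_nonneg _)).trans ?_)
  change _ * (opNorm M * _) ≤ _
  nlinarith [mul_nonneg h0 (sq_nonneg (‖WithLp.toLp 2 x‖ - ‖WithLp.toLp 2 z‖))]

open Matrix in
/-- The symmetric matrix whose quadratic form at `(w, z)` is the bilinear form
`wᵀ M (ρ w + s z)`. -/
def blockMat {n : ℕ} (ρ s : ℝ) (M : Matrix (Fin n) (Fin n) ℝ) :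
    Matrix (Fin n ⊕ Fin n) (Fin n ⊕ Fin n) ℝ :=
  Matrix.fromBlocks ((ρ / 2) • (M + Mᵀ)) ((s / 2) • M) ((s / 2) • Mᵀ) 0

open Matrix in
lemma blockMat_quad {n : ℕ} (ρ s : ℝ) (M : Matrix (Fin n) (Fin n) ℝ)
    (g : Fin n ⊕ Fin n → ℝ) :
    g ⬝ᵥ blockMat ρ s M *ᵥ g = ρ * ((g ∘ Sum.inl) ⬝ᵥ M *ᵥ (g ∘ Sum.inl))
      + s * ((g ∘ Sum.inl) ⬝ᵥ M *ᵥ (g ∘ Sum.inr)) := by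
  have ht : ∀ x z : Fin n → ℝ, x ⬝ᵥ Mᵀ *ᵥ z = z ⬝ᵥ M *ᵥ x := fun x z => by
    rw [Matrix.mulVec_transpose, dotProduct_comm, ← Matrix.dotProduct_mulVec]
  have hg : g = Sum.elim (g ∘ Sum.inl) (g ∘ Sum.inr) := (Sum.elim_comp_inl_inr g).symm
  conv_lhs => rw [hg, blockMat, Matrix.fromBlocks_mulVec, sumElim_dotProduct_sumElim]
  simp only [Sum.elim_comp_inl, Sum.elim_comp_inr, Matrix.add_mulVec, Matrix.smul_mulVec,
    dotProduct_add, dotProduct_smul, smul_eq_mul, ht, Matrix.zero_mulVec, dotProduct_zero]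
  ring

lemma blockMat_frob {n : ℕ} {ρ s : ℝ} (hρs : ρ ^ 2 + s ^ 2 = 1)
    (M : Matrix (Fin n) (Fin n) ℝ) :
    ∑ i, ∑ j, blockMat ρ s M i j ^ 2 ≤ frobNorm M ^ 2 := by
  have hF : frobNorm M ^ 2 = ∑ i, ∑ j, M i j ^ 2 :=
    Real.sq_sqrt (Finset.sum_nonneg fun i _ => Finset.sum_nonneg fun j _ => sq_nonneg _)
  have hF' : frobNorm M ^ 2 = ∑ i, ∑ j, M j i ^ 2 := by rw [hF, Finset.sum_comm]
  have hpos := sq_nonneg (frobNorm M)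
  simp only [Fintype.sum_sum_type, blockMat, Matrix.fromBlocks_apply₁₁,
    Matrix.fromBlocks_apply₁₂, Matrix.fromBlocks_apply₂₁, Matrix.fromBlocks_apply₂₂,
    Matrix.smul_apply, Matrix.add_apply, Matrix.transpose_apply, Matrix.zero_apply, smul_eq_mul,
    mul_pow, ← Finset.mul_sum, Finset.sum_add_distrib]
  rw [← hF, ← hF']
  have h1 : ∑ i, ∑ j, (M i j + M j i) ^ 2 ≤ 4 * frobNorm M ^ 2 := by
    calc ∑ i, ∑ j, (M i j + M j i) ^ 2 ≤ ∑ i, ∑ j, (2 * M i j ^ 2 + 2 * M j i ^ 2) := by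
          gcongr with i _ j _
          nlinarith [sq_nonneg (M i j - M j i)]
      _ = 4 * frobNorm M ^ 2 := by
          simp only [Finset.sum_add_distrib, ← Finset.mul_sum]
          rw [← hF, ← hF']
          ring
  have h2 := mul_le_mul_of_nonneg_left h1 (sq_nonneg (ρ / 2))
  have h3 : s ^ 2 = 1 - ρ ^ 2 := by linarith
  simp
  nlinarith [mul_nonneg (sq_nonneg s) hpos]

open Matrix in
/-- Upper-tail Chernoff bound for the correlated bilinear form. -/
lemma bilin_tail {n : ℕ} {ρ s : ℝ} (hρ : 0 ≤ ρ) (hs : 0 ≤ s) (hρs : ρ ^ 2 + s ^ 2 = 1)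
    (M : Matrix (Fin n) (Fin n) ℝ) {l : ℝ} (hl : 0 ≤ l) (hlM : l * (2 * opNorm M) ≤ 1 / 4)
    (t : ℝ) :
    ((Measure.pi fun _ : Fin n => gaussianReal 0 1).prod
        (Measure.pi fun _ : Fin n => gaussianReal 0 1))
      {w | t ≤ (∑ i, ∑ j, M i j * w.1 i * (ρ * w.1 j + s * w.2 j)) - ρ * Matrix.trace M}
      ≤ ENNReal.ofReal (Real.exp (-l * t + 4 * l ^ 2 * frobNorm M ^ 2)) := by
  have hherm : (blockMat ρ s M).IsHermitian := by
    rw [Matrix.IsHermitian, blockMat, Matrix.conjTranspose_eq_transpose_of_trivial,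
      Matrix.fromBlocks_transpose]
    simp [Matrix.transpose_smul, Matrix.transpose_add, add_comm]
  have h0 : 0 ≤ opNorm M := norm_nonneg _
  have hρ1 : ρ ≤ 1 := by nlinarith [sq_nonneg s]
  have hs1 : s ≤ 1 := by nlinarith [sq_nonneg ρ]
  have hK : ∀ v, |v ⬝ᵥ blockMat ρ s M *ᵥ v| ≤ 2 * opNorm M * (v ⬝ᵥ v) := by
    intro v
    have hv : v ⬝ᵥ v = (v ∘ Sum.inl) ⬝ᵥ (v ∘ Sum.inl) + (v ∘ Sum.inr) ⬝ᵥ (v ∘ Sum.inr) := by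
      simp [dotProduct, Fintype.sum_sum_type]
    have hp1 : 0 ≤ (v ∘ Sum.inl) ⬝ᵥ (v ∘ Sum.inl) :=
      Finset.sum_nonneg fun _ _ => mul_self_nonneg _
    have hp2 : 0 ≤ (v ∘ Sum.inr) ⬝ᵥ (v ∘ Sum.inr) :=
      Finset.sum_nonneg fun _ _ => mul_self_nonneg _
    rw [blockMat_quad, hv]
    refine (abs_add_le _ _).trans ?_
    rw [abs_mul, abs_mul, abs_of_nonneg hρ, abs_of_nonneg hs]
    have e1 := bilin_le M (v ∘ Sum.inl) (v ∘ Sum.inl)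
    have e2 := bilin_le M (v ∘ Sum.inl) (v ∘ Sum.inr)
    have e3 := mul_le_of_le_one_left (abs_nonneg ((v ∘ Sum.inl) ⬝ᵥ M *ᵥ (v ∘ Sum.inl))) hρ1
    have e4 := mul_le_of_le_one_left (abs_nonneg ((v ∘ Sum.inl) ⬝ᵥ M *ᵥ (v ∘ Sum.inr))) hs1
    nlinarith [mul_nonneg h0 hp1, mul_nonneg h0 hp2]
  have htr : (blockMat ρ s M).trace = ρ * M.trace := by
    simp only [blockMat, Matrix.trace, Fintype.sum_sum_type, Matrix.diag_apply,
      Matrix.fromBlocks_apply₁₁, Matrix.fromBlocks_apply₂₂, Matrix.smul_apply, Matrix.add_apply,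
      Matrix.transpose_apply, Matrix.zero_apply, Finset.sum_const_zero, add_zero, smul_eq_mul,
      Finset.mul_sum]
    refine Finset.sum_congr rfl fun i _ => ?_
    ring
  have key := quad_tail hherm hK hl hlM t
  have hmp := measurePreserving_sumPiEquivProdPi
    (fun _ : Fin n ⊕ Fin n => (gaussianReal 0 1 : Measure ℝ))
  rw [← hmp.measure_preimage_equiv]
  have hset : (MeasurableEquiv.sumPiEquivProdPi fun _ : Fin n ⊕ Fin n => ℝ) ⁻¹'
      {w | t ≤ (∑ i, ∑ j, M i j * w.1 i * (ρ * w.1 j + s * w.2 j)) - ρ * Matrix.trace M}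
      = {g | t ≤ g ⬝ᵥ blockMat ρ s M *ᵥ g - (blockMat ρ s M).trace} := by
    ext g
    simp only [Set.mem_preimage, Set.mem_ofPred_eq]
    rw [htr, blockMat_quad]
    have : (∑ i, ∑ j, M i j * g (Sum.inl i) * (ρ * g (Sum.inl j) + s * g (Sum.inr j)))
      = ρ * ((g ∘ Sum.inl) ⬝ᵥ M *ᵥ (g ∘ Sum.inl))
        + s * ((g ∘ Sum.inl) ⬝ᵥ M *ᵥ (g ∘ Sum.inr)) := by
      simp only [dotProduct, mulVec, Finset.mul_sum, ← Finset.sum_add_distrib,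
        Function.comp_apply]
      refine Finset.sum_congr rfl fun i _ => Finset.sum_congr rfl fun j _ => ?_
      ring
    rw [← this]
    rfl
  rw [hset]
  refine ENNReal.le_ofReal_iff_toReal_le (measure_ne_top _ _) (Real.exp_nonneg _) |>.mpr
    (key.trans ?_)
  rw [Real.exp_le_exp]
  have := mul_le_mul_of_nonneg_left (blockMat_frob hρs M) (by positivity : 0 ≤ 4 * l ^ 2)
  linarith

/-! ### Two-sided deviation bound -/

/-- The choice of the Chernoff parameter `l`: the minimum of `√L / F`, which balances the Gaussian
regime, and of `1 / (8 K)`, the largest value for which the moment generating function bound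
applies. -/
lemma exists_chernoff_param {F K L : ℝ} (hF : 0 < F) (hK : 0 < K) (hL : 0 ≤ L) :
    ∃ l : ℝ, 0 ≤ l ∧ l * (2 * K) ≤ 1 / 4 ∧
      -l * (40 * (F * √L + K * L)) + 4 * l ^ 2 * F ^ 2 ≤ -L := by
  have hsq : √L ^ 2 = L := Real.sq_sqrt hL
  have hs0 := Real.sqrt_nonneg L
  rcases le_total (√L / F) (1 / (8 * K)) with h | h
  · refine ⟨√L / F, by positivity, ?_, ?_⟩
    · calc √L / F * (2 * K) ≤ 1 / (8 * K) * (2 * K) := by gcongr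
        _ = 1 / 4 := by field_simp; norm_num
    · have e1 : √L / F * (F * √L) = L := by
        rw [← mul_assoc, div_mul_cancel₀ _ hF.ne', ← sq, hsq]
      have e2 : (√L / F) ^ 2 * F ^ 2 = L := by
        rw [← mul_pow, div_mul_cancel₀ _ hF.ne', hsq]
      have e3 : 0 ≤ √L / F * (K * L) := by positivity
      nlinarith
  · refine ⟨1 / (8 * K), by positivity, le_of_eq (by field_simp; norm_num), ?_⟩
    have e1 : 1 / (8 * K) * (K * L) = L / 8 := by field_simp
    have e2 : (1 / (8 * K)) ^ 2 * F ^ 2 ≤ L := by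
      calc (1 / (8 * K)) ^ 2 * F ^ 2 ≤ (√L / F) ^ 2 * F ^ 2 := by gcongr
        _ = L := by rw [← mul_pow, div_mul_cancel₀ _ hF.ne', hsq]
    have e3 : 0 ≤ 1 / (8 * K) * (F * √L) := by positivity
    nlinarith

/-- Lemma 1 of the paper, bilinear Hanson–Wright inequality: there is a
universal constant `c > 0` such that, for all `n`, `ρ ∈ [0,1]`, i.i.d. pairs `(X_i, Y_i)` of
standard Gaussians with correlation `ρ` (realized as `X_i = W_i`,
`Y_i = ρ W_i + √(1-ρ²) Z_i` on the canonical Gaussian product space), every matrix `M` and every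
`δ ∈ (0,1)`, with probability at least `1 - 2δ`,
`|∑_{ij} M_{ij} X_i Y_j - ρ tr(M)| ≤ c(‖M‖_F √(log(1/δ)) + ‖M‖ log(1/δ))`. -/
theorem stmt18 :
    ∃ c : ℝ, 0 < c ∧ ∀ (n : ℕ) (ρ : ℝ), ρ ∈ Set.Icc (0 : ℝ) 1 →
      ∀ (M : Matrix (Fin n) (Fin n) ℝ) (δ : ℝ), δ ∈ Set.Ioo (0 : ℝ) 1 →
      ENNReal.ofReal (1 - 2 * δ) ≤
        ((Measure.pi fun _ : Fin n => gaussianReal 0 1).prod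
            (Measure.pi fun _ : Fin n => gaussianReal 0 1))
          {w | |(∑ i, ∑ j, M i j * w.1 i * (ρ * w.1 j + Real.sqrt (1 - ρ ^ 2) * w.2 j))
                  - ρ * Matrix.trace M| ≤
                c * (frobNorm M * Real.sqrt (Real.log (1 / δ)) + opNorm M * Real.log (1 / δ))} := by
  refine ⟨40, by norm_num, fun n ρ ⟨hρ0, hρ1⟩ M δ ⟨hδ0, hδ1⟩ => ?_⟩
  by_cases hM : M = 0
  · -- Both sides of the inequality defining the event vanish.
    subst hM
    refine le_trans (ENNReal.ofReal_le_one.mpr (by linarith)) (le_of_eq ?_)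
    rw [← measure_univ (μ := (Measure.pi fun _ : Fin n => gaussianReal 0 1).prod
            (Measure.pi fun _ : Fin n => gaussianReal 0 1))]
    congr 1
    ext w
    simp [frobNorm, opNorm]
  set s := Real.sqrt (1 - ρ ^ 2) with hs
  set L := Real.log (1 / δ) with hL
  set P := (Measure.pi fun _ : Fin n => gaussianReal 0 1).prod
            (Measure.pi fun _ : Fin n => gaussianReal 0 1) with hP
  have hL0 : 0 ≤ L := Real.log_nonneg (by rw [le_div_iff₀ hδ0]; linarith)
  have hexpL : Real.exp (-L) = δ := by
    rw [hL, one_div, Real.log_inv, neg_neg, Real.exp_log hδ0]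
  have hs0 : 0 ≤ s := Real.sqrt_nonneg _
  have hρs : ρ ^ 2 + s ^ 2 = 1 := by
    rw [hs, Real.sq_sqrt (by nlinarith)]
    ring
  have hF : 0 < frobNorm M := by
    refine Real.sqrt_pos.mpr ?_
    obtain ⟨i, j, hij⟩ : ∃ i j, M i j ≠ 0 := by
      by_contra! h
      exact hM (Matrix.ext h)
    refine Finset.sum_pos' (fun i _ => Finset.sum_nonneg fun j _ => sq_nonneg _)
      ⟨i, Finset.mem_univ _, ?_⟩
    exact Finset.sum_pos' (fun j _ => sq_nonneg _) ⟨j, Finset.mem_univ _, by positivity⟩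
  have hK : 0 < opNorm M := by
    refine norm_pos_iff.mpr fun h => hM ?_
    simpa using h
  obtain ⟨l, hl0, hlK, hle⟩ := exists_chernoff_param hF hK hL0
  set t := 40 * (frobNorm M * √L + opNorm M * L) with ht
  set Q : (Fin n → ℝ) × (Fin n → ℝ) → ℝ := fun w =>
    (∑ i, ∑ j, M i j * w.1 i * (ρ * w.1 j + s * w.2 j)) - ρ * Matrix.trace M with hQ
  have hFneg : frobNorm (-M) = frobNorm M := by simp [frobNorm]
  have hKneg : opNorm (-M) = opNorm M := by simp [opNorm]
  have hbound : ENNReal.ofReal (Real.exp (-l * t + 4 * l ^ 2 * frobNorm M ^ 2))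
      ≤ ENNReal.ofReal δ := by
    refine ENNReal.ofReal_le_ofReal ?_
    rw [← hexpL]
    exact Real.exp_le_exp.mpr hle
  have hup : P {w | t ≤ Q w} ≤ ENNReal.ofReal δ :=
    (bilin_tail hρ0 hs0 hρs M hl0 hlK t).trans hbound
  have hlow : P {w | t ≤ -Q w} ≤ ENNReal.ofReal δ := by
    have h := bilin_tail hρ0 hs0 hρs (-M) hl0 (by rwa [hKneg]) t
    rw [hFneg] at h
    refine le_trans (le_of_eq ?_) (h.trans hbound)
    congr 1
    ext w
    simp only [Set.mem_ofPred_eq, hQ, Matrix.neg_apply, neg_mul, Finset.sum_neg_distrib,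
      Matrix.trace_neg, mul_neg, neg_sub, sub_neg_eq_add]
    rw [neg_add_eq_sub]
  have hmeas : MeasurableSet {w | |Q w| ≤ t} := by
    refine measurableSet_le ?_ measurable_const
    simp only [hQ]
    fun_prop
  have hcompl : P {w | |Q w| ≤ t}ᶜ ≤ ENNReal.ofReal (2 * δ) := by
    have hsub : {w | |Q w| ≤ t}ᶜ ⊆ {w | t ≤ Q w} ∪ {w | t ≤ -Q w} := by
      intro w hw
      simp only [Set.mem_compl_iff, Set.mem_ofPred_eq, not_le] at hw
      rcases lt_abs.mp hw with h | h
      · exact Or.inl h.le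
      · exact Or.inr h.le
    calc P {w | |Q w| ≤ t}ᶜ ≤ P {w | t ≤ Q w} + P {w | t ≤ -Q w} :=
          (measure_mono hsub).trans (measure_union_le _ _)
      _ ≤ ENNReal.ofReal δ + ENNReal.ofReal δ := add_le_add hup hlow
      _ = ENNReal.ofReal (2 * δ) := by rw [← ENNReal.ofReal_add hδ0.le hδ0.le, two_mul]
  have hadd := prob_add_prob_compl (μ := P) hmeas
  rw [ENNReal.ofReal_sub _ (by linarith), ENNReal.ofReal_one, tsub_le_iff_right, ← hadd]
  exact add_le_add le_rfl hcompl

end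
end

section
/- Let σ be a uniformly random permutation of [n] and let n_ℓ denote the number of ℓ-cycles of σ. For every k ∈ [n] and all nonnegative integers a₁, …, a_k: P(n₁ ≥ a₁, n₂ ≥ a₂, …, n_k ≥ a_k) ≤ 1/∏_{ℓ=1}^{k} (ℓ^{a_ℓ}·a_ℓ!). Consequently, for every nonnegative function g : ℕ^k → [0,∞], E[g(n₁, …, n_k)] ≤ e^{h_k}·E[g(Z₁, …, Z_k)], where Z₁, …, Z_k are independent random variables with Z_ℓ ~ Poisson(1/ℓ) and h_k = ∑_{ℓ=1}^{k} 1/ℓ is the k-th harmonic number. -/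
/-!
Record the cycle counts of `σ ∈ S_n` by the multiset `fullType σ` of all cycle lengths, fixed points
included. By Cauchy's formula the permutations with full type `m` have proportion `1 / zc m` in
`S_n`, where `zc m = ∏ ℓ^{m_ℓ} m_ℓ!`; in particular the reciprocals `1 / zc m` over all full types
`m` of `S_N` add up to `1`, for every `N`.

The event `n_ℓ ≥ a_ℓ` says that the full type contains the multiset `A` with `a_ℓ` copies of each
`ℓ ≤ k`. Every such full type is `A + B` with `B` a full type of `S_{n - sum A}`, and
`zc (A + B) ≥ zc A * zc B` since `(a + b)! ≥ a! b!`. Summing `1 / zc (A + B) ≤ 1 / zc A * 1 / zc B`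
over `B` gives the tail bound `1 / zc A` (`card_fullType_ge`).

For the second claim, `P(n = z) ≤ P(n ≥ z) ≤ ∏ ℓ^{-z_ℓ} / z_ℓ!`, and the right-hand side is
`e^{h_k}` times the probability that the Poisson vector equals `z`.
-/

open scoped ENNReal Classical

noncomputable section

/-- The number of `j`-cycles in the cycle decomposition of a permutation `σ` of `Fin n`
(for `j = 1`, the number of fixed points). -/
def cycleCount {n : ℕ} (σ : Equiv.Perm (Fin n)) (j : ℕ) : ℕ :=
  if j = 1 then (Finset.univ.filter fun x => σ x = x).card
  else σ.cycleType.count j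

/-! ### Cycle types with fixed points -/

/-- The multiset of all cycle lengths of `σ`, with one `1` for each fixed point. -/
def fullType {n : ℕ} (σ : Equiv.Perm (Fin n)) : Multiset ℕ :=
  σ.cycleType + Multiset.replicate (n - σ.cycleType.sum) 1

/-- The centralizer order `∏ ℓ^{m_ℓ} m_ℓ!`, where `m_ℓ` is the multiplicity of `ℓ` in `m`. -/
def zc (m : Multiset ℕ) : ℕ :=
  m.prod * ∏ i ∈ m.toFinset, (m.count i).factorial

/-- The cycle types, fixed points included, that occur in `S_n`. -/
def fullTypes (n : ℕ) : Finset (Multiset ℕ) :=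
  Finset.univ.image (fullType (n := n))

lemma one_notMem_cycleType {n : ℕ} (σ : Equiv.Perm (Fin n)) : 1 ∉ σ.cycleType := fun h =>
  absurd (Equiv.Perm.two_le_of_mem_cycleType h) (by norm_num)

lemma count_fullType {n : ℕ} (σ : Equiv.Perm (Fin n)) (j : ℕ) :
    (fullType σ).count j = cycleCount σ j := by
  unfold fullType cycleCount
  split_ifs with h
  · subst h
    rw [Multiset.count_add, Multiset.count_eq_zero_of_notMem (one_notMem_cycleType σ),
      Multiset.count_replicate_self, Equiv.Perm.sum_cycleType, zero_add]
    have h1 := Finset.card_compl σ.support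
    rw [Fintype.card_fin] at h1
    rw [← h1]
    congr 1
    ext x
    simp
  · rw [Multiset.count_add, Multiset.count_replicate, if_neg (Ne.symm h), add_zero]

lemma mem_fullTypes {n : ℕ} {m : Multiset ℕ} : m ∈ fullTypes n ↔ 0 ∉ m ∧ m.sum = n := by
  unfold fullTypes
  simp only [Finset.mem_image, Finset.mem_univ, true_and]
  constructor
  · rintro ⟨σ, rfl⟩
    have h := σ.sum_cycleType_le
    rw [Fintype.card_fin] at h
    refine ⟨?_, ?_⟩
    · intro h0
      rcases Multiset.mem_add.1 h0 with h0 | h0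
      · exact absurd (Equiv.Perm.two_le_of_mem_cycleType h0) (by norm_num)
      · exact absurd (Multiset.eq_of_mem_replicate h0) (by norm_num)
    · unfold fullType
      rw [Multiset.sum_add, Multiset.sum_replicate, smul_eq_mul]
      omega
  · rintro ⟨h0, hs⟩
    have hsplit : m = m.filter (2 ≤ ·) + Multiset.replicate (m.count 1) 1 := by
      ext j
      rw [Multiset.count_add, Multiset.count_filter, Multiset.count_replicate]
      rcases lt_trichotomy j 1 with hj | hj | hj
      · have : j = 0 := by omega
        subst this
        simp [h0]
      · subst hj; simp
      · rw [if_pos (show 2 ≤ j from hj), if_neg (by omega), add_zero]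
    have hsum : (m.filter (2 ≤ ·)).sum + m.count 1 = n := by
      conv_rhs => rw [← hs, hsplit]
      rw [Multiset.sum_add, Multiset.sum_replicate, smul_eq_mul, mul_one]
    obtain ⟨σ, hσ⟩ := (Equiv.Perm.exists_with_cycleType_iff (Fin n)
      (m := m.filter (2 ≤ ·))).2 ⟨by rw [Fintype.card_fin]; omega,
        fun a ha => (Multiset.mem_filter.1 ha).2⟩
    refine ⟨σ, ?_⟩
    unfold fullType
    rw [hσ]
    conv_rhs => rw [hsplit]
    congr 2
    omega

lemma fullType_eq_iff {n : ℕ} (σ τ : Equiv.Perm (Fin n)) :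
    fullType σ = fullType τ ↔ σ.cycleType = τ.cycleType := by
  constructor
  · intro h
    ext j
    by_cases hj : j = 1
    · subst hj
      rw [Multiset.count_eq_zero_of_notMem (one_notMem_cycleType σ),
        Multiset.count_eq_zero_of_notMem (one_notMem_cycleType τ)]
    · have := congrArg (Multiset.count j) h
      simpa [count_fullType, cycleCount, hj] using this
  · intro h
    unfold fullType
    rw [h]

/-! ### Centralizer orders and class sizes -/

lemma zc_pos {m : Multiset ℕ} (h : 0 ∉ m) : 0 < zc m := by
  unfold zc
  have : 0 < m.prod := Multiset.prod_pos fun a ha =>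
    Nat.pos_of_ne_zero fun h0 => h (h0 ▸ ha)
  positivity

lemma zc_eq_of_subset {m : Multiset ℕ} {S : Finset ℕ} (h : m.toFinset ⊆ S) :
    zc m = m.prod * ∏ i ∈ S, (m.count i).factorial := by
  unfold zc
  congr 1
  refine Finset.prod_subset h fun x _ hx => ?_
  rw [Multiset.count_eq_zero_of_notMem (by simpa using hx), Nat.factorial_zero]

lemma zc_mul_le (A B : Multiset ℕ) : zc A * zc B ≤ zc (A + B) := by
  have hA : A.toFinset ⊆ (A + B).toFinset := by
    intro x hx; simp only [Multiset.mem_toFinset, Multiset.mem_add] at *; exact Or.inl hx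
  have hB : B.toFinset ⊆ (A + B).toFinset := by
    intro x hx; simp only [Multiset.mem_toFinset, Multiset.mem_add] at *; exact Or.inr hx
  rw [zc_eq_of_subset hA, zc_eq_of_subset hB, zc, Multiset.prod_add, mul_mul_mul_comm,
    ← Finset.prod_mul_distrib]
  refine Nat.mul_le_mul_left _ (Finset.prod_le_prod' fun i _ => ?_)
  rw [Multiset.count_add]
  exact Nat.le_of_dvd (Nat.factorial_pos _) (Nat.factorial_mul_factorial_dvd_factorial_add _ _)

/-- Cauchy's formula for the size of a conjugacy class of `S_n`. -/
lemma card_fiber_mul {n : ℕ} {m : Multiset ℕ} (hm : m ∈ fullTypes n) :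
    (Finset.univ.filter fun σ : Equiv.Perm (Fin n) => fullType σ = m).card * zc m
      = n.factorial := by
  obtain ⟨τ, -, rfl⟩ := Finset.mem_image.1 hm
  have h := Equiv.Perm.card_of_cycleType_mul_eq (Fin n) τ.cycleType
  rw [if_pos ⟨τ.sum_cycleType_le, fun a ha => Equiv.Perm.two_le_of_mem_cycleType ha⟩,
    Fintype.card_fin] at h
  rw [← h]
  congr 1
  · congr 1
    ext σ
    simp [fullType_eq_iff]
  · have hsub : (fullType τ).toFinset ⊆ insert 1 τ.cycleType.toFinset := by
      intro x hx
      rw [Multiset.mem_toFinset, fullType, Multiset.mem_add] at hx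
      rcases hx with hx | hx
      · exact Finset.mem_insert_of_mem (Multiset.mem_toFinset.2 hx)
      · rw [Multiset.eq_of_mem_replicate hx]; exact Finset.mem_insert_self _ _
    have h1 : (1 : ℕ) ∉ τ.cycleType.toFinset := by simpa using one_notMem_cycleType τ
    rw [zc_eq_of_subset hsub, Finset.prod_insert h1]
    have e1 : (fullType τ).prod = τ.cycleType.prod := by simp [fullType]
    have e2 : (fullType τ).count 1 = n - τ.cycleType.sum := by
      rw [fullType, Multiset.count_add,
        Multiset.count_eq_zero_of_notMem (one_notMem_cycleType τ),
        Multiset.count_replicate_self, zero_add]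
    have e3 : ∏ i ∈ τ.cycleType.toFinset, ((fullType τ).count i).factorial
        = ∏ i ∈ τ.cycleType.toFinset, (τ.cycleType.count i).factorial := by
      refine Finset.prod_congr rfl fun i hi => ?_
      have : i ≠ 1 := fun h => h1 (h ▸ hi)
      rw [count_fullType, cycleCount, if_neg this]
    rw [e1, e2, e3]
    ring

lemma card_fiber {n : ℕ} {m : Multiset ℕ} (hm : m ∈ fullTypes n) :
    ((Finset.univ.filter fun σ : Equiv.Perm (Fin n) => fullType σ = m).card : ℝ)
      = n.factorial * (1 / (zc m : ℝ)) := by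
  have hz : (zc m : ℝ) ≠ 0 := by exact_mod_cast (zc_pos (mem_fullTypes.1 hm).1).ne'
  rw [← card_fiber_mul hm]
  push_cast
  field_simp

lemma card_filter_fullType {n : ℕ} (P : Multiset ℕ → Prop) [DecidablePred P] :
    ((Finset.univ.filter fun σ : Equiv.Perm (Fin n) => P (fullType σ)).card : ℝ)
      = n.factorial * ∑ m ∈ (fullTypes n).filter P, 1 / (zc m : ℝ) := by
  rw [Finset.card_eq_sum_card_fiberwise (f := fullType) (t := (fullTypes n).filter P),
    Finset.mul_sum]
  · push_cast
    refine Finset.sum_congr rfl fun m hm => ?_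
    rw [Finset.mem_filter] at hm
    rw [← card_fiber hm.1, Finset.filter_filter]
    congr 2
    ext σ
    simp only [Finset.mem_filter, Finset.mem_univ, true_and]
    exact ⟨fun h => h.2, fun h => ⟨h ▸ hm.2, h⟩⟩
  · intro σ hσ
    simp only [Finset.coe_filter, Finset.mem_univ, true_and, Set.mem_ofPred_eq] at hσ ⊢
    exact ⟨Finset.mem_image_of_mem _ (Finset.mem_univ _), hσ⟩

lemma sum_inv_zc (n : ℕ) : ∑ m ∈ fullTypes n, 1 / (zc m : ℝ) = 1 := by
  have h := card_filter_fullType (n := n) fun _ => True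
  simp only [Finset.filter_true, Finset.card_univ, Fintype.card_perm, Fintype.card_fin] at h
  have h0 : (n.factorial : ℝ) ≠ 0 := by positivity
  exact (mul_left_cancel₀ h0 (by rw [mul_one]; exact h)).symm

/-! ### The tail bound -/

/-- The tail bound, obtained by removing `A` from the full types containing it: this leaves distinct
full types of `S_{n - sum A}`, whose weights `1 / zc` add up to at most `1`. -/
lemma card_fullType_ge {n : ℕ} (A : Multiset ℕ) (hA : 0 ∉ A) :
    ((Finset.univ.filter fun σ : Equiv.Perm (Fin n) => A ≤ fullType σ).card : ℝ)
      ≤ n.factorial * (1 / (zc A : ℝ)) := by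
  rw [card_filter_fullType (A ≤ ·)]
  refine mul_le_mul_of_nonneg_left ?_ (by positivity)
  have hzA : (0 : ℝ) < zc A := by exact_mod_cast zc_pos hA
  calc ∑ m ∈ (fullTypes n).filter (A ≤ ·), 1 / (zc m : ℝ)
      ≤ ∑ m ∈ (fullTypes n).filter (A ≤ ·), 1 / (zc A : ℝ) * (1 / (zc (m - A) : ℝ)) := by
        refine Finset.sum_le_sum fun m hm => ?_
        rw [Finset.mem_filter] at hm
        have h0 : 0 ∉ m - A := fun h =>
          (mem_fullTypes.1 hm.1).1 (Multiset.mem_of_le (Multiset.sub_le_self _ _) h)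
        have hz : (0 : ℝ) < zc (m - A) := by exact_mod_cast zc_pos h0
        have hle := zc_mul_le A (m - A)
        rw [add_tsub_cancel_of_le hm.2] at hle
        rw [one_div_mul_one_div]
        exact one_div_le_one_div_of_le (by positivity) (by exact_mod_cast hle)
    _ = 1 / (zc A : ℝ) * ∑ m ∈ ((fullTypes n).filter (A ≤ ·)).image (· - A),
          1 / (zc m : ℝ) := by
        rw [← Finset.mul_sum, Finset.sum_image]
        intro m hm m' hm' h
        simp only [Finset.coe_filter, Set.mem_ofPred_eq] at hm hm' h
        rw [← add_tsub_cancel_of_le hm.2, h, add_tsub_cancel_of_le hm'.2]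
    _ ≤ 1 / (zc A : ℝ) * ∑ m ∈ fullTypes (n - A.sum), 1 / (zc m : ℝ) := by
        refine mul_le_mul_of_nonneg_left ?_ (by positivity)
        refine Finset.sum_le_sum_of_subset_of_nonneg ?_ fun _ _ _ => by positivity
        intro m' hm'
        obtain ⟨m, hm, rfl⟩ := Finset.mem_image.1 hm'
        rw [Finset.mem_filter, mem_fullTypes] at hm
        refine mem_fullTypes.2 ⟨fun h =>
          hm.1.1 (Multiset.mem_of_le (Multiset.sub_le_self _ _) h), ?_⟩
        have hs := congrArg Multiset.sum (add_tsub_cancel_of_le hm.2)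
        rw [Multiset.sum_add, hm.1.2] at hs
        omega
    _ = 1 / (zc A : ℝ) := by rw [sum_inv_zc, mul_one]

/-- The multiset with `a ℓ` copies of each `ℓ ∈ {1, …, k}`. -/
def ofCounts (k : ℕ) (a : ℕ → ℕ) : Multiset ℕ :=
  ∑ ℓ ∈ Finset.Icc 1 k, Multiset.replicate (a ℓ) ℓ

lemma count_ofCounts (k : ℕ) (a : ℕ → ℕ) (j : ℕ) :
    (ofCounts k a).count j = if j ∈ Finset.Icc 1 k then a j else 0 := by
  unfold ofCounts
  rw [Multiset.count_sum']
  simp only [Multiset.count_replicate]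
  rw [Finset.sum_ite_eq']

lemma zc_ofCounts (k : ℕ) (a : ℕ → ℕ) :
    zc (ofCounts k a) = ∏ ℓ ∈ Finset.Icc 1 k, (ℓ ^ a ℓ * (a ℓ).factorial) := by
  have hsub : (ofCounts k a).toFinset ⊆ Finset.Icc 1 k := by
    intro j hj
    by_contra h
    have := count_ofCounts k a j
    rw [if_neg h, Multiset.count_eq_zero] at this
    exact this (Multiset.mem_toFinset.1 hj)
  rw [zc_eq_of_subset hsub, Finset.prod_mul_distrib]
  congr 1
  · unfold ofCounts
    rw [Multiset.prod_sum]
    simp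
  · exact Finset.prod_congr rfl fun i hi => by rw [count_ofCounts, if_pos hi]

lemma tail_bound (n k : ℕ) (a : ℕ → ℕ) :
    ((Finset.univ.filter fun σ : Equiv.Perm (Fin n) =>
          ∀ ℓ ∈ Finset.Icc 1 k, a ℓ ≤ cycleCount σ ℓ).card : ℝ) /
          (Fintype.card (Equiv.Perm (Fin n)) : ℝ) ≤
        1 / ∏ ℓ ∈ Finset.Icc 1 k, ((ℓ : ℝ) ^ (a ℓ) * (Nat.factorial (a ℓ) : ℝ)) := by
  have h0 : 0 ∉ ofCounts k a := by
    rw [← Multiset.count_eq_zero, count_ofCounts]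
    simp
  have h := card_fullType_ge (n := n) (ofCounts k a) h0
  have hz : (zc (ofCounts k a) : ℝ)
      = ∏ ℓ ∈ Finset.Icc 1 k, ((ℓ : ℝ) ^ (a ℓ) * (Nat.factorial (a ℓ) : ℝ)) := by
    rw [zc_ofCounts]; push_cast; rfl
  rw [hz] at h
  rw [Fintype.card_perm, Fintype.card_fin, div_le_iff₀' (by positivity)]
  refine le_trans (le_of_eq ?_) h
  congr 2
  ext σ
  simp only [Finset.mem_filter, Finset.mem_univ, true_and, Multiset.le_iff_count,
    count_ofCounts, count_fullType]
  refine ⟨fun h j => ?_, fun h j hj => ?_⟩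
  · split_ifs with hj
    · exact h j hj
    · exact Nat.zero_le _
  · simpa only [if_pos hj] using h j

/-! ### Comparison with the Poisson weights -/

/-- The probability that the counts equal `z` is at most the tail probability at `z`, and the bound
for the latter is `e^{h_k}` times the Poisson weight of `z`. -/
lemma point_bound (n k : ℕ) (z : Fin k → ℕ) :
    ((Finset.univ.filter fun σ : Equiv.Perm (Fin n) =>
        (fun i : Fin k => cycleCount σ (i.1 + 1)) = z).card : ℝ) /
          (Fintype.card (Equiv.Perm (Fin n)) : ℝ) ≤
      Real.exp (∑ ℓ ∈ Finset.Icc 1 k, (1 : ℝ) / ℓ) *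
        ∏ i : Fin k, (Real.exp (-(1 / ((i.1 : ℝ) + 1))) * (1 / ((i.1 : ℝ) + 1)) ^ (z i) /
                (Nat.factorial (z i) : ℝ)) := by
  -- the index shift `i ↦ i + 1` identifies `Fin k` with `{1, …, k}`
  have hIcc : ∀ {M : Type} [CommMonoid M] (f : ℕ → M),
      ∏ ℓ ∈ Finset.Icc 1 k, f ℓ = ∏ i : Fin k, f (i.1 + 1) := by
    intro M _ f
    rw [Fin.prod_univ_eq_prod_range (fun i => f (i + 1)) k, Finset.range_eq_Ico,
      Finset.prod_Ico_add' f 0 k 1]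
    rfl
  let a : ℕ → ℕ := fun ℓ => if h : ℓ - 1 < k then z ⟨ℓ - 1, h⟩ else 0
  have ha : ∀ i : Fin k, a (i.1 + 1) = z i := fun i => by simp [a]
  have hsum : Real.exp (∑ ℓ ∈ Finset.Icc 1 k, (1 : ℝ) / ℓ)
      = ∏ i : Fin k, Real.exp (1 / ((i.1 : ℝ) + 1)) := by
    rw [Real.exp_sum, hIcc]
    push_cast
    rfl
  have hrhs : Real.exp (∑ ℓ ∈ Finset.Icc 1 k, (1 : ℝ) / ℓ) *
        ∏ i : Fin k, (Real.exp (-(1 / ((i.1 : ℝ) + 1))) * (1 / ((i.1 : ℝ) + 1)) ^ (z i) /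
                (Nat.factorial (z i) : ℝ))
      = 1 / ∏ ℓ ∈ Finset.Icc 1 k, ((ℓ : ℝ) ^ (a ℓ) * (Nat.factorial (a ℓ) : ℝ)) := by
    rw [hsum, hIcc, ← Finset.prod_mul_distrib, one_div, ← Finset.prod_inv_distrib]
    refine Finset.prod_congr rfl fun i _ => ?_
    rw [ha, Real.exp_neg]
    have := Real.exp_pos (1 / ((i.1 : ℝ) + 1))
    push_cast
    rw [one_div_pow]
    field_simp
  rw [hrhs]
  refine le_trans ?_ (tail_bound n k a)
  refine div_le_div_of_nonneg_right ?_ (by positivity)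
  norm_cast
  refine Finset.card_le_card fun σ hσ => ?_
  simp only [Finset.mem_filter, Finset.mem_univ, true_and] at hσ ⊢
  intro ℓ hℓ
  rw [Finset.mem_Icc] at hℓ
  obtain ⟨j, rfl⟩ : ∃ j, ℓ = j + 1 := ⟨ℓ - 1, by omega⟩
  have h1 := ha ⟨j, by omega⟩
  have h2 := congrFun hσ ⟨j, by omega⟩
  simp only at h1 h2
  rw [h1, h2]

/-- Lemma 7 of the paper: for a uniformly random permutation `σ` of `[n]` with
cycle counts `n_ℓ`, for every `k ∈ [n]` and all nonnegative integers `a₁,…,a_k`,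
`P(n₁ ≥ a₁, …, n_k ≥ a_k) ≤ 1/∏_{ℓ=1}^k ℓ^{a_ℓ} a_ℓ!`; consequently, for every nonnegative
function `g`, `E[g(n₁,…,n_k)] ≤ e^{h_k} E[g(Z₁,…,Z_k)]` where the `Z_ℓ ~ Poisson(1/ℓ)` are
independent and `h_k` is the `k`-th harmonic number. -/
theorem stmt19 (n k : ℕ) (hk1 : 1 ≤ k) (hkn : k ≤ n) :
    (∀ a : ℕ → ℕ,
      ((Finset.univ.filter fun σ : Equiv.Perm (Fin n) =>
          ∀ ℓ ∈ Finset.Icc 1 k, a ℓ ≤ cycleCount σ ℓ).card : ℝ) /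
          (Fintype.card (Equiv.Perm (Fin n)) : ℝ) ≤
        1 / ∏ ℓ ∈ Finset.Icc 1 k, ((ℓ : ℝ) ^ (a ℓ) * (Nat.factorial (a ℓ) : ℝ))) ∧
    (∀ g : (Fin k → ℕ) → ℝ≥0∞,
      (∑ σ : Equiv.Perm (Fin n), g fun i => cycleCount σ (i.1 + 1)) /
          (Fintype.card (Equiv.Perm (Fin n)) : ℝ≥0∞) ≤
        ENNReal.ofReal (Real.exp (∑ ℓ ∈ Finset.Icc 1 k, (1 : ℝ) / ℓ)) *
          ∑' z : Fin k → ℕ,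
            (∏ i : Fin k, ENNReal.ofReal
              (Real.exp (-(1 / ((i.1 : ℝ) + 1))) * (1 / ((i.1 : ℝ) + 1)) ^ (z i) /
                (Nat.factorial (z i) : ℝ))) * g z) := by
  refine ⟨tail_bound n k, fun g => ?_⟩
  have hN : (Fintype.card (Equiv.Perm (Fin n)) : ℝ) ≠ 0 := by
    rw [Fintype.card_perm]; positivity
  -- group the permutations by the value `z` of their vector of cycle counts
  have hgroup : (∑ σ : Equiv.Perm (Fin n), g fun i : Fin k => cycleCount σ (i.1 + 1))
      = ∑' z : Fin k → ℕ, ((Finset.univ.filter fun σ : Equiv.Perm (Fin n) =>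
        (fun i : Fin k => cycleCount σ (i.1 + 1)) = z).card : ℝ≥0∞) * g z := by
    have hpt : ∀ σ : Equiv.Perm (Fin n), (g fun i : Fin k => cycleCount σ (i.1 + 1))
        = ∑' z : Fin k → ℕ,
          if (fun i : Fin k => cycleCount σ (i.1 + 1)) = z then g z else 0 := by
      intro σ
      rw [tsum_eq_single (fun i : Fin k => cycleCount σ (i.1 + 1))
        (fun z hz => if_neg (Ne.symm hz)), if_pos rfl]
    rw [Finset.sum_congr rfl fun σ _ => hpt σ,
      ← Summable.tsum_finsetSum fun _ _ => ENNReal.summable]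
    refine tsum_congr fun z => ?_
    rw [← Finset.sum_filter, Finset.sum_const, nsmul_eq_mul]
  rw [hgroup, div_eq_mul_inv, ← ENNReal.tsum_mul_right, ← ENNReal.tsum_mul_left]
  refine ENNReal.tsum_le_tsum fun z => ?_
  rw [mul_right_comm, ← mul_assoc]
  refine mul_le_mul_left ?_ _
  have h := ENNReal.ofReal_le_ofReal (point_bound n k z)
  rw [ENNReal.ofReal_mul (Real.exp_pos _).le,
    ENNReal.ofReal_prod_of_nonneg (fun i _ => by positivity),
    ENNReal.ofReal_div_of_pos (by positivity), ENNReal.ofReal_natCast,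
    ENNReal.ofReal_natCast, div_eq_mul_inv] at h
  exact h

end
end
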